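/- arXiv:1812.08897 — 2 statements merged into one kernel-verified Lean document; each statement's English description precedes it below -/
import Mathlib

section
/- Let M be a quasi-projective strongly harmonic left R-module and let N be a fully invariant submodule of M. Then the quotient module M/N is strongly harmonic. -/
/-!
Preimage under `π : M → M ⧸ N` identifies the fully invariant submodules of `M ⧸ N` with the fully
invariant submodules of `M` containing `N`: endomorphisms of `M` descend because `N` is fully
invariant, and endomorphisms of `M ⧸ N` lift because `M` is quasi-projective. Hence distinct
maximal fully invariant submodules of `M ⧸ N` pull back to distinct ones of `M`, and the separating
pair `N'`, `L'` found in `M` can be pushed forward.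

The product stays zero because `M` is projective relative to each of its submodules
(`QuasiProjective.exists_lift`): given `f : M ⧸ N → π(N')`, the map `f ∘ π` lifts along the
surjection `N' → π(N')` to some `g : M → N'`. Since `g(L') ≤ L' ·_M N' = 0`, also `f(π(L')) = 0`.
-/

open Submodule

variable {R : Type*} [Ring R] {M : Type*} [AddCommGroup M] [Module R M]

/-- The product `N ·_M L = Σ { f(N) : f ∈ Hom_R(M, L) }` of submodules of `M`. -/
def SmProd (N L : Submodule R M) : Submodule R M :=
  ⨆ f : M →ₗ[R] L, N.map (L.subtype ∘ₗ f)

/-- A submodule is fully invariant if it is stable under every endomorphism of `M`. -/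
def IsFI (N : Submodule R M) : Prop :=
  ∀ f : M →ₗ[R] M, N.map f ≤ N

/-- `N` is a maximal proper fully invariant submodule of `M`
(a coatom of the lattice of fully invariant submodules). -/
def IsMaxFI (N : Submodule R M) : Prop :=
  IsFI N ∧ N ≠ ⊤ ∧ ∀ L : Submodule R M, IsFI L → N < L → L = ⊤

/-- `M` is strongly harmonic if for every pair of distinct maximal proper fully invariant
submodules `N, L` there are fully invariant `N', L'` with `N' ⊄ N`, `L' ⊄ L`, `L' ·_M N' = 0`. -/
def StronglyHarmonic (R M : Type*) [Ring R] [AddCommGroup M] [Module R M] : Prop :=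
  ∀ N L : Submodule R M, IsMaxFI N → IsMaxFI L → N ≠ L →
    ∃ N' L' : Submodule R M, IsFI N' ∧ IsFI L' ∧ ¬ N' ≤ N ∧ ¬ L' ≤ L ∧ SmProd L' N' = ⊥

/-- `Ann_M(K) = Σ { L ≤ M : L ·_M K = 0 }`. -/
def AnnM (K : Submodule R M) : Submodule R M :=
  sSup {L : Submodule R M | SmProd L K = ⊥}

/-- `Ler(N) = Σ { K fully invariant : N + Ann_M(K) = M }`. -/
def Ler (N : Submodule R M) : Submodule R M :=
  sSup {K : Submodule R M | IsFI K ∧ N ⊔ AnnM K = ⊤}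

/-- `M` is quasi-projective. -/
def QuasiProjective (R M : Type*) [Ring R] [AddCommGroup M] [Module R M] : Prop :=
  ∀ (K : Submodule R M) (h : M →ₗ[R] M ⧸ K), ∃ g : M →ₗ[R] M, K.mkQ ∘ₗ g = h

/-- The lattice `Λ^{fi}(M)` of fully invariant submodules is compact. -/
def FICompact (R M : Type*) [Ring R] [AddCommGroup M] [Module R M] : Prop :=
  ∀ S : Set (Submodule R M), (∀ N ∈ S, IsFI N) → sSup S = ⊤ →
    ∃ F : Finset (Submodule R M), ↑F ⊆ S ∧ sSup (F : Set (Submodule R M)) = ⊤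

/-- The lattice `Λ^{fi}(M)` is normal. -/
def FINormal (R M : Type*) [Ring R] [AddCommGroup M] [Module R M] : Prop :=
  ∀ N L : Submodule R M, IsFI N → IsFI L → N ⊔ L = ⊤ →
    ∃ N' L' : Submodule R M, IsFI N' ∧ IsFI L' ∧
      N ⊔ L' = ⊤ ∧ N' ⊔ L = ⊤ ∧ SmProd N' L' = ⊥

/-- Gelfand module. -/
def Gelfand (R M : Type*) [Ring R] [AddCommGroup M] [Module R M] : Prop :=
  ∀ N L : Submodule R M, IsCoatom N → IsCoatom L → N ≠ L →
    ∃ N' L' : Submodule R M, IsFI N' ∧ IsFI L' ∧ ¬ N' ≤ N ∧ ¬ L' ≤ L ∧ SmProd L' N' = ⊥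

/-- The hull-kernel topology on `mx^{fi}(M)`, generated by the sets
`m(K) = {𝓜 : K ⊄ 𝓜}` for `K` fully invariant. -/
def mxfiTop (R M : Type*) [Ring R] [AddCommGroup M] [Module R M] :
    TopologicalSpace {N : Submodule R M // IsMaxFI N} :=
  TopologicalSpace.generateFrom
    {U | ∃ K : Submodule R M, IsFI K ∧ U = {𝓜 : {N : Submodule R M // IsMaxFI N} | ¬ K ≤ 𝓜.1}}

/-- The frame `Ψ(M)`. -/
def PsiSet (R M : Type*) [Ring R] [AddCommGroup M] [Module R M] : Set (Submodule R M) :=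
  {N | IsFI N ∧ ∀ n ∈ N, N ⊔ AnnM (Submodule.span R {n}) = ⊤}

/-- The points (`∧`-irreducible elements) of `Ψ(M)`. -/
def PsiPt (R M : Type*) [Ring R] [AddCommGroup M] [Module R M] : Set (Submodule R M) :=
  {p | p ∈ PsiSet R M ∧ p ≠ ⊤ ∧
    ∀ N ∈ PsiSet R M, ∀ L ∈ PsiSet R M, N ⊓ L ≤ p → N ≤ p ∨ L ≤ p}

/-- The topology on the point space of `Ψ(M)`, with opens generated by
`U(N) = {p : N ⊄ p}` for `N ∈ Ψ(M)`. -/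
def psiPtTop (R M : Type*) [Ring R] [AddCommGroup M] [Module R M] :
    TopologicalSpace (PsiPt R M) :=
  TopologicalSpace.generateFrom
    {U | ∃ N ∈ PsiSet R M, U = {p : PsiPt R M | ¬ N ≤ p.1}}

theorem smProd_eq_bot_iff {X : Type*} [AddCommGroup X] [Module R X] {L K : Submodule R X} :
    SmProd L K = ⊥ ↔ ∀ f : X →ₗ[R] K, ∀ x ∈ L, f x = 0 := by
  rw [SmProd, eq_bot_iff, iSup_le_iff]
  simp only [SetLike.le_def]
  simp

/-- A quasi-projective module `M` is projective relative to each submodule `K`: maps from `M` to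
the range of `φ : K → X` lift along `φ`. The target embeds into the quotient of `M` by the image
of `ker φ`, and a lift `M → M` automatically has values in `K`, as that image lies in `K`. -/
theorem QuasiProjective.exists_lift (hqp : QuasiProjective R M) {X : Type*} [AddCommGroup X]
    [Module R X] (K : Submodule R M) (φ : K →ₗ[R] X) (h : M →ₗ[R] LinearMap.range φ) :
    ∃ g : M →ₗ[R] K, ∀ m, φ (g m) = h m := by
  let J : Submodule R M := (LinearMap.ker φ).map K.subtype
  let ι : (K ⧸ LinearMap.ker φ) →ₗ[R] M ⧸ J :=
    (LinearMap.ker φ).mapQ J K.subtype (Submodule.le_comap_map _ _)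
  obtain ⟨g, hg⟩ := hqp J (ι ∘ₗ φ.quotKerEquivRange.symm.toLinearMap ∘ₗ h)
  have key : ∀ m, ∃ k : K, (k : M) = g m ∧ φ k = h m := by
    intro m
    obtain ⟨k, hk⟩ := (h m).2
    have hk' : φ.quotKerEquivRange.symm (h m) = (LinearMap.ker φ).mkQ k := by
      rw [LinearEquiv.symm_apply_eq]
      exact Subtype.ext hk.symm
    have hgm : J.mkQ (g m) = J.mkQ k := by
      have := LinearMap.congr_fun hg m
      simpa [hk', ι] using this
    obtain ⟨j, hj, hjk⟩ := (Submodule.Quotient.eq J).1 hgm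
    have hj0 : φ j = 0 := hj
    refine ⟨j + k, ?_, ?_⟩
    · have hjk' : (j : M) = g m - k := hjk
      rw [Submodule.coe_add, hjk', sub_add_cancel]
    · rw [map_add, hj0, zero_add, hk]
  have hmem : ∀ m, g m ∈ K := fun m => by
    obtain ⟨k, hk, -⟩ := key m
    exact hk ▸ k.2
  refine ⟨g.codRestrict K hmem, fun m => ?_⟩
  obtain ⟨k, hk, hφ⟩ := key m
  rw [← hφ]
  exact congrArg φ (Subtype.ext hk.symm)

theorem IsFI.comap_mkQ {N : Submodule R M} (hN : IsFI N) {A : Submodule R (M ⧸ N)}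
    (hA : IsFI A) : IsFI (A.comap N.mkQ) := by
  intro f
  rw [Submodule.map_le_iff_le_comap]
  intro x hx
  exact hA (N.mapQ N f (Submodule.map_le_iff_le_comap.1 (hN f)))
    (Submodule.mem_map_of_mem (p := A) hx)

/-- Endomorphisms of `M ⧸ N` lift to the quasi-projective module `M`, so images of fully
invariant submodules are fully invariant. -/
theorem IsFI.map_mkQ (hqp : QuasiProjective R M) (N : Submodule R M) {A : Submodule R M}
    (hA : IsFI A) : IsFI (A.map N.mkQ) := by
  intro f
  obtain ⟨g, hg⟩ := hqp N (f ∘ₗ N.mkQ)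
  rw [← Submodule.map_comp, ← hg, Submodule.map_comp]
  exact Submodule.map_mono (hA g)

theorem IsMaxFI.comap_mkQ (hqp : QuasiProjective R M) {N : Submodule R M} (hN : IsFI N)
    {A : Submodule R (M ⧸ N)} (hA : IsMaxFI A) : IsMaxFI (A.comap N.mkQ) := by
  obtain ⟨hA, hne, hmax⟩ := hA
  have hsurj := N.mkQ_surjective
  refine ⟨hN.comap_mkQ hA, fun h => hne ?_, fun L hL hlt => ?_⟩
  · exact Submodule.comap_injective_of_surjective hsurj (h.trans (Submodule.comap_top _).symm)
  · have hNL : N ≤ L := (N.le_comap_mkQ A).trans hlt.le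
    have hcm : (L.map N.mkQ).comap N.mkQ = L := by
      rw [Submodule.comap_map_mkQ, sup_eq_right.2 hNL]
    have hlt' : A < L.map N.mkQ := by
      rw [← Submodule.comap_lt_comap_iff_of_surjective hsurj, hcm]
      exact hlt
    rw [← hcm, hmax _ (hL.map_mkQ hqp N) hlt', Submodule.comap_top]

/-- A quotient of a quasi-projective strongly harmonic module by a
fully invariant submodule is strongly harmonic. -/
theorem stronglyHarmonic_quotient
    (hqp : QuasiProjective R M) (hsh : StronglyHarmonic R M)
    (N : Submodule R M) (hN : IsFI N) :
    StronglyHarmonic R (M ⧸ N) := by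
  intro A B hA hB hAB
  obtain ⟨N', L', hN', hL', hNA, hLB, h0⟩ := hsh _ _ (hA.comap_mkQ hqp hN) (hB.comap_mkQ hqp hN)
    fun h => hAB (Submodule.comap_injective_of_surjective N.mkQ_surjective h)
  refine ⟨N'.map N.mkQ, L'.map N.mkQ, hN'.map_mkQ hqp N, hL'.map_mkQ hqp N,
    fun h => hNA (Submodule.map_le_iff_le_comap.1 h),
    fun h => hLB (Submodule.map_le_iff_le_comap.1 h), ?_⟩
  rw [smProd_eq_bot_iff] at h0 ⊢
  rintro f _ ⟨l, hl, rfl⟩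
  let φ : N' →ₗ[R] M ⧸ N := N.mkQ ∘ₗ N'.subtype
  have hφ : N'.map N.mkQ = LinearMap.range φ := by
    rw [LinearMap.range_comp, Submodule.range_subtype]
  obtain ⟨g, hg⟩ := hqp.exists_lift N' φ (Submodule.inclusion hφ.le ∘ₗ f ∘ₗ N.mkQ)
  have hgl := hg l
  rw [h0 g l hl, map_zero] at hgl
  exact Subtype.ext hgl.symm
end

section
/- Let M be a projective left R-module. If M is strongly harmonic, then the space mx^fi(M) of maximal proper fully invariant submodules, with its hull-kernel topology, is a Hausdorff topological space. Conversely, if in addition the intersection of all maximal proper fully invariant submodules of M is zero and mx^fi(M) is Hausdorff, then M is strongly harmonic. -/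
/-!
The point where projectivity enters is that a maximal proper fully invariant submodule `P` is
prime for the product `·_M`: if `L` is fully invariant and `K ·_M L ≤ P`, then `K ≤ P` or `L ≤ P`
(`IsMaxFI.prime`). Indeed, if `L ≰ P` then `L + P = M`, and projectivity splits the identity of `M`
as a sum of maps `M → L` and `M → P`. The first map sends `K` into `K ·_M L ≤ P` and the second
takes values in `P`, so `K ≤ P`.

Primeness makes the sets `m(N')` and `m(L')` disjoint as soon as `L' ·_M N' = 0`, which gives the
Hausdorff property from strong harmonicity. Since `K ·_M L ≤ K ⊓ L`, primeness also gives
`m(K) ∩ m(L) = m(K ⊓ L)`, so the sets `m(K)` form a basis (`exists_basic_subset`). In the Hausdorff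
case, distinct points thus have disjoint basic neighbourhoods `m(N')` and `m(L')`; then
`L' ·_M N'` lies in every maximal fully invariant submodule, hence is zero when these intersect
trivially.
-/

open Submodule

variable {R : Type*} [Ring R] {M : Type*} [AddCommGroup M] [Module R M]

theorem smProd_le_right (N L : Submodule R M) : SmProd N L ≤ L := by
  refine iSup_le fun f => ?_
  rintro _ ⟨x, -, rfl⟩
  exact (f x).2

theorem smProd_le_left {N : Submodule R M} (hN : IsFI N) (L : Submodule R M) :
    SmProd N L ≤ N :=
  iSup_le fun _ => hN _

theorem IsFI.inf {N L : Submodule R M} (hN : IsFI N) (hL : IsFI L) : IsFI (N ⊓ L) := by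
  rintro f _ ⟨x, hx, rfl⟩
  exact ⟨hN f ⟨x, hx.1, rfl⟩, hL f ⟨x, hx.2, rfl⟩⟩

theorem IsFI.sup {N L : Submodule R M} (hN : IsFI N) (hL : IsFI L) : IsFI (N ⊔ L) := by
  intro f
  rw [Submodule.map_sup]
  exact sup_le_sup (hN f) (hL f)

theorem IsMaxFI.sup_eq_top {P K : Submodule R M} (hP : IsMaxFI P) (hK : IsFI K)
    (h : ¬ K ≤ P) : K ⊔ P = ⊤ :=
  hP.2.2 _ (hK.sup hP.1) (right_lt_sup.2 h)

/-- A maximal proper fully invariant submodule of a projective module is prime with respect to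
the product `·_M`. -/
theorem IsMaxFI.prime (hproj : Module.Projective R M) {P K L : Submodule R M} (hP : IsMaxFI P)
    (hL : IsFI L) (h : SmProd K L ≤ P) : K ≤ P ∨ L ≤ P := by
  by_contra! hc
  have hLP := hP.sup_eq_top hL hc.2
  -- As `L + P = M`, the sum map `L × P → M` is onto, and projectivity of `M` provides a section
  -- `s`; its two components decompose the identity.
  let φ : (L × P) →ₗ[R] M := L.subtype.coprod P.subtype
  have hφ : Function.Surjective φ := by
    rw [← LinearMap.range_eq_top, LinearMap.range_coprod, range_subtype, range_subtype, hLP]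
  obtain ⟨s, hs⟩ := Module.projective_lifting_property φ LinearMap.id hφ
  refine hc.1 fun x hx => ?_
  have hx1 : ((s x).1 : M) ∈ P :=
    h (le_iSup (fun f : M →ₗ[R] L => K.map (L.subtype ∘ₗ f)) (LinearMap.fst R L P ∘ₗ s)
      ⟨x, hx, rfl⟩)
  have hx2 : ((s x).1 : M) + (s x).2 = x := LinearMap.congr_fun hs x
  rw [← hx2]
  exact P.add_mem hx1 (s x).2.2

/-- The sets `m(K)` form a basis of the hull-kernel topology, and not merely a subbasis: every
open neighbourhood of a point contains some `m(K)` around that point. -/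
theorem exists_basic_subset (hproj : Module.Projective R M)
    {U : Set {N : Submodule R M // IsMaxFI N}} (hU : @IsOpen _ (mxfiTop R M) U) :
    ∀ P ∈ U, ∃ K : Submodule R M, IsFI K ∧ ¬ K ≤ P.1 ∧
      ∀ Q : {N : Submodule R M // IsMaxFI N}, ¬ K ≤ Q.1 → Q ∈ U := by
  replace hU : TopologicalSpace.GenerateOpen _ U := hU
  induction hU with
  | basic s hs =>
    obtain ⟨K, hK, rfl⟩ := hs
    exact fun P hP => ⟨K, hK, hP, fun _ hQ => hQ⟩
  | univ =>
    exact fun P _ => ⟨⊤, fun _ => le_top, fun h => P.2.2.1 (top_le_iff.1 h),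
      fun _ _ => Set.mem_univ _⟩
  | inter s t _ _ ihs iht =>
    intro P hP
    obtain ⟨K, hK, hKP, hKs⟩ := ihs P hP.1
    obtain ⟨L, hL, hLP, hLt⟩ := iht P hP.2
    refine ⟨K ⊓ L, hK.inf hL, fun h => ?_, fun Q hQ =>
      ⟨hKs Q fun h => hQ (inf_le_left.trans h), hLt Q fun h => hQ (inf_le_right.trans h)⟩⟩
    have hKL : SmProd K L ≤ P.1 :=
      (le_inf (smProd_le_left hK L) (smProd_le_right K L)).trans h
    exact (P.2.prime hproj hL hKL).elim hKP hLP
  | sUnion S _ ih =>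
    rintro P ⟨s, hsS, hPs⟩
    obtain ⟨K, hK, hKP, hKs⟩ := ih s hsS P hPs
    exact ⟨K, hK, hKP, fun Q hQ => ⟨s, hsS, hKs Q hQ⟩⟩

/-- If `M` is projective and strongly harmonic, then `mx^{fi}(M)` with the
hull-kernel topology is Hausdorff; conversely, if moreover the intersection of all maximal
proper fully invariant submodules is zero, Hausdorffness implies strong harmonicity. -/
theorem stronglyHarmonic_hausdorff (hproj : Module.Projective R M) :
    (StronglyHarmonic R M → @T2Space {N : Submodule R M // IsMaxFI N} (mxfiTop R M)) ∧
    (sInf {N : Submodule R M | IsMaxFI N} = ⊥ →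
      @T2Space {N : Submodule R M // IsMaxFI N} (mxfiTop R M) → StronglyHarmonic R M) := by
  constructor
  · intro hSH
    let _ := mxfiTop R M
    refine ⟨fun N L hNL => ?_⟩
    obtain ⟨N', L', hN', hL', hN, hL, h0⟩ := hSH N.1 L.1 N.2 L.2 fun h => hNL (Subtype.ext h)
    refine ⟨_, _, TopologicalSpace.isOpen_generateFrom_of_mem ⟨N', hN', rfl⟩,
      TopologicalSpace.isOpen_generateFrom_of_mem ⟨L', hL', rfl⟩, hN, hL, ?_⟩
    rw [Set.disjoint_left]
    intro P hPN hPL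
    exact (P.2.prime hproj hN' (h0.le.trans bot_le)).elim hPL hPN
  · intro hJ hT N L hN hL hNL
    let _ := mxfiTop R M
    obtain ⟨U, V, hU, hV, hNU, hLV, hUV⟩ :=
      hT.t2 (show (⟨N, hN⟩ : {N : Submodule R M // IsMaxFI N}) ≠ ⟨L, hL⟩ from
        fun h => hNL (congrArg Subtype.val h))
    obtain ⟨N', hN', hN'N, hN'U⟩ := exists_basic_subset hproj hU _ hNU
    obtain ⟨L', hL', hL'L, hL'V⟩ := exists_basic_subset hproj hV _ hLV
    refine ⟨N', L', hN', hL', hN'N, hL'L, ?_⟩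
    rw [← le_bot_iff, ← hJ]
    refine le_sInf fun P hP => ?_
    by_contra h
    exact Set.disjoint_left.1 hUV
      (hN'U ⟨P, hP⟩ fun h' => h ((smProd_le_right L' N').trans h'))
      (hL'V ⟨P, hP⟩ fun h' => h ((smProd_le_left hL' N').trans h'))
end
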